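/- arXiv:1502.06795 — 4 statements merged into one kernel-verified Lean document; each statement's English description precedes it below -/
import Mathlib

section
/- Let 0 < p < 1 and let d = (d_j)_{j≥1} be a sequence of nonnegative real numbers with (d_j)_{j≥1} ∈ ℓ_p(ℕ) and Σ_{j≥1} d_j < 1. Then the family ((|ν|!/ν!) d^ν)_{ν∈F}, indexed by the set F of finitely supported sequences ν = (ν_j)_{j≥1} of nonnegative integers, belongs to ℓ_p(F); that is, Σ_{ν∈F} ((|ν|!/ν!) d^ν)^p < ∞. -/
/-!
Choose `ε > 0` so small that `β j := d j + ε * d j ^ p` still has sum less than `1`. Then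
`d j ^ p = β j ^ p * g j ^ (1 - p)` for `g j := (d j / β j) ^ (p / (1 - p))` (with `0 / 0 = 0` where
`d j = 0`), and `g` is summable, being at most a constant times `d ^ p`, with all terms less than
`1`. Young's inequality gives `((|ν|! / ν!) d^ν) ^ p ≤ p (|ν|! / ν!) β^ν + (1 - p) g^ν`. The first
term sums to `∑ n, (∑ j, β j) ^ n` by the multinomial theorem, and the second to
`∏ j, (1 - g j)⁻¹`. For `1 ≤ p` the multinomial theorem alone suffices, as `ℓ_1 ⊆ ℓ_p`.
-/

open Finset Filter
open scoped Nat

variable {ι : Type*}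

theorem cast_multinomial_eq_factorial_div {K : Type*} [Field K] [CharZero K] (ν : ι →₀ ℕ) :
    (ν.multinomial : K) = ((ν.sum fun _ k => k)! : K) / ν.prod fun _ k => (k ! : K) := by
  have prod_ne_zero : (ν.prod fun _ k => (k ! : K)) ≠ 0 :=
    prod_ne_zero_iff.2 fun j _ => Nat.cast_ne_zero.2 (Nat.factorial_ne_zero (ν j))
  rw [eq_div_iff prod_ne_zero, Finsupp.multinomial_eq, mul_comm]
  exact_mod_cast Nat.multinomial_spec ν.support ν

theorem sum_pow_eq_sum_finsuppAntidiag {R : Type*} [CommSemiring R] [DecidableEq ι]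
    (s : Finset ι) (f : ι → R) (n : ℕ) :
    (∑ j ∈ s, f j) ^ n =
      ∑ ν ∈ s.finsuppAntidiag n, ν.multinomial * ν.prod fun j k => f j ^ k := by
  rw [sum_pow_eq_sum_piAntidiag, finsuppAntidiag, sum_map, ← sum_attach]
  refine sum_congr rfl fun k _ => ?_
  have support_subset : s.filter (k.1 · ≠ 0) ⊆ s := filter_subset _ _
  rw [Finsupp.prod_of_support_subset _ support_subset _ fun _ _ => pow_zero _,
    ← Finsupp.multinomial_of_support_subset support_subset]
  rfl

theorem sum_finsupp_prod_eq_prod_sum {α R : Type*} [Zero α] [CommSemiring R]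
    (s : Finset ι) (t : ι → Finset α) {f : ι → α → R} (hf : ∀ j, f j 0 = 1) :
    ∑ ν ∈ s.finsupp t, ν.prod f = ∏ j ∈ s, ∑ a ∈ t j, f j a := by
  classical
  rw [prod_sum, Finset.finsupp, sum_map]
  refine sum_congr (by congr!) fun a _ => ?_
  change (Finsupp.indicator s a).prod f = _
  rw [Finsupp.prod_of_support_subset _ (Finsupp.support_indicator_subset _ _) _ fun j _ => hf j,
    ← prod_attach]
  exact prod_congr rfl fun j _ => by rw [Finsupp.indicator_of_mem j.2]

theorem prod_pow_nonneg {f : ι → ℝ} (hf : ∀ j, 0 ≤ f j) (ν : ι →₀ ℕ) :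
    0 ≤ ν.prod fun j k => f j ^ k :=
  Finset.prod_nonneg fun j _ => pow_nonneg (hf j) _

theorem multinomial_mul_prod_pow_nonneg {f : ι → ℝ} (hf : ∀ j, 0 ≤ f j) (ν : ι →₀ ℕ) :
    0 ≤ ν.multinomial * ν.prod fun j k => f j ^ k :=
  mul_nonneg (Nat.cast_nonneg _) (prod_pow_nonneg hf ν)

theorem sum_pow_le_inv_one_sub {x : ℝ} (hx₀ : 0 ≤ x) (hx₁ : x < 1) (s : Finset ℕ) :
    ∑ n ∈ s, x ^ n ≤ (1 - x)⁻¹ :=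
  tsum_geometric_of_lt_one hx₀ hx₁ ▸
    (summable_geometric_of_lt_one hx₀ hx₁).sum_le_tsum s fun n _ => pow_nonneg hx₀ n

theorem summable_multinomial_mul_prod_pow {β : ι → ℝ} (hβ₀ : ∀ j, 0 ≤ β j)
    (hβ : Summable β) (hβ₁ : ∑' j, β j < 1) :
    Summable fun ν : ι →₀ ℕ => (ν.multinomial : ℝ) * ν.prod fun j k => β j ^ k := by
  classical
  refine summable_of_sum_le (c := (1 - ∑' j, β j)⁻¹) (multinomial_mul_prod_pow_nonneg hβ₀)
    fun S => ?_
  let degree (ν : ι →₀ ℕ) : ℕ := ν.sum fun _ k => k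
  let s : Finset ι := S.biUnion Finsupp.support
  have fiber_subset (n : ℕ) : S.filter (degree · = n) ⊆ s.finsuppAntidiag n := fun ν hν => by
    obtain ⟨hνS, hνn⟩ := mem_filter.1 hν
    exact mem_finsuppAntidiag'.2 ⟨hνn, subset_biUnion_of_mem Finsupp.support hνS⟩
  calc ∑ ν ∈ S, (ν.multinomial : ℝ) * ν.prod (fun j k => β j ^ k)
      = ∑ n ∈ S.image degree, ∑ ν ∈ S with degree ν = n,
          (ν.multinomial : ℝ) * ν.prod fun j k => β j ^ k :=
        (sum_fiberwise_of_maps_to (fun _ => mem_image_of_mem degree) _).symm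
    _ ≤ ∑ n ∈ S.image degree, (∑ j ∈ s, β j) ^ n := sum_le_sum fun n _ => by
        rw [sum_pow_eq_sum_finsuppAntidiag]
        exact sum_le_sum_of_subset_of_nonneg (fiber_subset n)
          fun ν _ _ => multinomial_mul_prod_pow_nonneg hβ₀ ν
    _ ≤ ∑ n ∈ S.image degree, (∑' j, β j) ^ n := sum_le_sum fun n _ =>
        pow_le_pow_left₀ (sum_nonneg fun j _ => hβ₀ j) (hβ.sum_le_tsum s fun j _ => hβ₀ j) n
    _ ≤ (1 - ∑' j, β j)⁻¹ := sum_pow_le_inv_one_sub (tsum_nonneg hβ₀) hβ₁ _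

theorem summable_div_one_sub {g : ι → ℝ} (hg₀ : ∀ j, 0 ≤ g j) (hg : Summable g) :
    Summable fun j => g j / (1 - g j) := by
  refine (hg.mul_left 2).of_norm_bounded_eventually ?_
  filter_upwards [hg.tendsto_cofinite_zero.eventually_lt_const one_half_pos] with j hj
  have one_sub_pos : 0 < 1 - g j := by linarith
  rw [Real.norm_of_nonneg (div_nonneg (hg₀ j) one_sub_pos.le), div_le_iff₀ one_sub_pos]
  nlinarith [hg₀ j]

theorem summable_prod_pow {g : ι → ℝ} (hg₀ : ∀ j, 0 ≤ g j) (hg₁ : ∀ j, g j < 1)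
    (hg : Summable g) :
    Summable fun ν : ι →₀ ℕ => ν.prod fun j k => g j ^ k := by
  classical
  have ratio_nonneg (j : ι) : 0 ≤ g j / (1 - g j) := div_nonneg (hg₀ j) (sub_nonneg.2 (hg₁ j).le)
  refine summable_of_sum_le (c := Real.exp (∑' j, g j / (1 - g j))) (prod_pow_nonneg hg₀)
    fun S => ?_
  let s : Finset ι := S.biUnion Finsupp.support
  let t (j : ι) : Finset ℕ := S.image (· j)
  have subset_box : S ⊆ s.finsupp t := fun ν hν =>
    mem_finsupp_iff.2 ⟨subset_biUnion_of_mem Finsupp.support hν,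
      fun j _ => mem_image_of_mem (· j) hν⟩
  calc ∑ ν ∈ S, ν.prod (fun j k => g j ^ k)
      ≤ ∑ ν ∈ s.finsupp t, ν.prod fun j k => g j ^ k :=
        sum_le_sum_of_subset_of_nonneg subset_box fun ν _ _ => prod_pow_nonneg hg₀ ν
    _ = ∏ j ∈ s, ∑ k ∈ t j, g j ^ k := sum_finsupp_prod_eq_prod_sum s t fun j => pow_zero (g j)
    _ ≤ ∏ j ∈ s, (1 + g j / (1 - g j)) := by
        refine prod_le_prod (fun j _ => sum_nonneg fun k _ => pow_nonneg (hg₀ j) k) fun j _ => ?_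
        have one_sub_ne_zero : 1 - g j ≠ 0 := (sub_pos.2 (hg₁ j)).ne'
        calc ∑ k ∈ t j, g j ^ k ≤ (1 - g j)⁻¹ := sum_pow_le_inv_one_sub (hg₀ j) (hg₁ j) _
          _ = 1 + g j / (1 - g j) := by field_simp; ring
    _ ≤ Real.exp (∑ j ∈ s, g j / (1 - g j)) := Real.prod_one_add_le_exp_sum s ratio_nonneg
    _ ≤ Real.exp (∑' j, g j / (1 - g j)) := Real.exp_le_exp.2 <|
        (summable_div_one_sub hg₀ hg).sum_le_tsum s fun j _ => ratio_nonneg j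

theorem summable_rpow_of_one_le {f : ι → ℝ} {p : ℝ} (hp : 1 ≤ p) (hf₀ : ∀ j, 0 ≤ f j)
    (hf : Summable f) : Summable fun j => f j ^ p := by
  refine hf.of_norm_bounded_eventually ?_
  filter_upwards [hf.tendsto_cofinite_zero.eventually_le_const one_pos] with j hj
  rw [Real.norm_of_nonneg (Real.rpow_nonneg (hf₀ j) p)]
  exact Real.rpow_le_self_of_le_one (hf₀ j) hj hp

theorem prod_pow_rpow {f : ι → ℝ} (hf : ∀ j, 0 ≤ f j) (p : ℝ) (ν : ι →₀ ℕ) :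
    (ν.prod fun j k => f j ^ k) ^ p = ν.prod fun j k => (f j ^ p) ^ k := by
  simp only [Finsupp.prod, ← Real.finsetProd_rpow _ _ fun j _ => pow_nonneg (hf j) _,
    Real.rpow_pow_comm (hf _)]

section Factorization

variable {p : ℝ} {d : ι → ℝ}

theorem rpow_multinomial_mul_prod_pow_le {β g : ι → ℝ} (hp₀ : 0 ≤ p) (hp₁ : p ≤ 1)
    (hd₀ : ∀ j, 0 ≤ d j) (hβ₀ : ∀ j, 0 ≤ β j) (hg₀ : ∀ j, 0 ≤ g j)
    (hdβg : ∀ j, d j ^ p = β j ^ p * g j ^ (1 - p)) (ν : ι →₀ ℕ) :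
    (ν.multinomial * ν.prod fun j k => d j ^ k) ^ p ≤
      p * (ν.multinomial * ν.prod fun j k => β j ^ k) +
        (1 - p) * ν.prod fun j k => g j ^ k := by
  have prod_eq : (ν.prod fun j k => d j ^ k) ^ p =
      (ν.prod fun j k => β j ^ k) ^ p * (ν.prod fun j k => g j ^ k) ^ (1 - p) := by
    simp only [prod_pow_rpow hd₀, prod_pow_rpow hβ₀, prod_pow_rpow hg₀, hdβg, mul_pow,
      Finsupp.prod_mul]
  calc (ν.multinomial * ν.prod fun j k => d j ^ k) ^ p
      = (ν.multinomial * ν.prod fun j k => β j ^ k) ^ p *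
          (ν.prod fun j k => g j ^ k) ^ (1 - p) := by
        rw [Real.mul_rpow (Nat.cast_nonneg _) (prod_pow_nonneg hd₀ ν), prod_eq,
          Real.mul_rpow (Nat.cast_nonneg _) (prod_pow_nonneg hβ₀ ν), mul_assoc]
    _ ≤ _ := Real.geom_mean_le_arith_mean2_weighted hp₀ (sub_nonneg.2 hp₁)
        (multinomial_mul_prod_pow_nonneg hβ₀ ν) (prod_pow_nonneg hg₀ ν) (add_sub_cancel p 1)

theorem exists_pos_tsum_add_mul_lt_one {f : ι → ℝ} (hd : Summable d) (hf : Summable f)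
    (hd₁ : ∑' j, d j < 1) : ∃ ε > 0, ∑' j, (d j + ε * f j) < 1 := by
  have tendsto : Tendsto (fun ε : ℝ => ∑' j, d j + ε * ∑' j, f j) (nhdsWithin 0 (Set.Ioi 0))
      (nhds (∑' j, d j)) :=
    (Continuous.tendsto' (by fun_prop) _ _ (by simp)).mono_left nhdsWithin_le_nhds
  obtain ⟨ε, hε₁, hε₀⟩ := ((tendsto.eventually_lt_const hd₁).and self_mem_nhdsWithin).exists
  exact ⟨ε, hε₀, by rwa [hd.tsum_add (hf.mul_left ε), tsum_mul_left]⟩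

theorem div_add_mul_rpow_lt_one {x ε : ℝ} (hx : 0 ≤ x) (hε : 0 < ε) :
    x / (x + ε * x ^ p) < 1 := by
  rcases hx.eq_or_lt with rfl | hx
  · simp
  · have : 0 < ε * x ^ p := by positivity
    exact (div_lt_one (by positivity)).2 (by linarith)

theorem div_add_mul_rpow_le {x ε : ℝ} (hp₁ : p < 1) (hx : 0 ≤ x) (hε : 0 < ε) :
    x / (x + ε * x ^ p) ≤ x ^ (1 - p) / ε := by
  rcases hx.eq_or_lt with rfl | hx
  · simp [Real.zero_rpow (sub_pos.2 hp₁).ne']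
  · calc x / (x + ε * x ^ p) ≤ x / (ε * x ^ p) := by gcongr; linarith
      _ = x ^ (1 - p) / ε := by
        rw [Real.rpow_sub hx, Real.rpow_one, div_div, mul_comm]

theorem exists_summable_rpow_factorization (hp₀ : 0 < p) (hp₁ : p < 1) (hd₀ : ∀ j, 0 ≤ d j)
    (hdp : Summable fun j => d j ^ p) (hd : Summable d) (hd₁ : ∑' j, d j < 1) :
    ∃ β g : ι → ℝ, (∀ j, 0 ≤ β j) ∧ Summable β ∧ ∑' j, β j < 1 ∧
      (∀ j, 0 ≤ g j) ∧ (∀ j, g j < 1) ∧ Summable g ∧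
      ∀ j, d j ^ p = β j ^ p * g j ^ (1 - p) := by
  obtain ⟨ε, hε, tsum_lt_one⟩ := exists_pos_tsum_add_mul_lt_one hd hdp hd₁
  have hq : 0 < 1 - p := sub_pos.2 hp₁
  have exponent_pos : 0 < p / (1 - p) := div_pos hp₀ hq
  let β (j : ι) : ℝ := d j + ε * d j ^ p
  have term_nonneg (j : ι) : 0 ≤ ε * d j ^ p := mul_nonneg hε.le (Real.rpow_nonneg (hd₀ j) p)
  have hβ₀ (j : ι) : 0 ≤ β j := add_nonneg (hd₀ j) (term_nonneg j)
  have ratio_nonneg (j : ι) : 0 ≤ d j / β j := div_nonneg (hd₀ j) (hβ₀ j)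
  have hg₀ (j : ι) : 0 ≤ (d j / β j) ^ (p / (1 - p)) := Real.rpow_nonneg (ratio_nonneg j) _
  refine ⟨β, fun j => (d j / β j) ^ (p / (1 - p)), hβ₀, hd.add (hdp.mul_left ε), tsum_lt_one,
    hg₀, fun j => ?_, ?_, fun j => ?_⟩
  · exact Real.rpow_lt_one (ratio_nonneg j) (div_add_mul_rpow_lt_one (hd₀ j) hε) exponent_pos
  · refine (hdp.div_const (ε ^ (p / (1 - p)))).of_nonneg_of_le hg₀ fun j => ?_
    calc (d j / β j) ^ (p / (1 - p)) ≤ (d j ^ (1 - p) / ε) ^ (p / (1 - p)) :=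
          Real.rpow_le_rpow (ratio_nonneg j) (div_add_mul_rpow_le hp₁ (hd₀ j) hε) exponent_pos.le
      _ = d j ^ p / ε ^ (p / (1 - p)) := by
          rw [Real.div_rpow (Real.rpow_nonneg (hd₀ j) _) hε.le, ← Real.rpow_mul (hd₀ j),
            mul_div_cancel₀ p hq.ne']
  · have mul_ratio : β j * (d j / β j) = d j :=
      mul_div_cancel_of_imp' fun h => le_antisymm (by linarith [term_nonneg j]) (hd₀ j)
    rw [← Real.rpow_mul (ratio_nonneg j), div_mul_cancel₀ p hq.ne',
      ← Real.mul_rpow (hβ₀ j) (ratio_nonneg j), mul_ratio]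

end Factorization

theorem summability_factorial_family_general {p : ℝ} (hp₀ : 0 < p) {d : ι → ℝ}
    (hd₀ : ∀ j, 0 ≤ d j) (hdp : Summable fun j => d j ^ p) (hd : Summable d)
    (hd₁ : ∑' j, d j < 1) :
    Summable fun ν : ι →₀ ℕ =>
      (((ν.sum fun _ k => k)! : ℝ) / (ν.prod fun _ k => (k ! : ℝ)) *
        ν.prod fun j k => d j ^ k) ^ p := by
  simp only [← cast_multinomial_eq_factorial_div]
  rcases le_or_gt 1 p with hp₁ | hp₁
  · exact summable_rpow_of_one_le hp₁ (multinomial_mul_prod_pow_nonneg hd₀)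
      (summable_multinomial_mul_prod_pow hd₀ hd hd₁)
  · obtain ⟨β, g, hβ₀, hβ, hβ₁, hg₀, hg₁, hg, hdβg⟩ :=
      exists_summable_rpow_factorization hp₀ hp₁ hd₀ hdp hd hd₁
    exact Summable.of_nonneg_of_le
      (fun ν => Real.rpow_nonneg (multinomial_mul_prod_pow_nonneg hd₀ ν) p)
      (rpow_multinomial_mul_prod_pow_le hp₀.le hp₁.le hd₀ hβ₀ hg₀ hdβg)
      (((summable_multinomial_mul_prod_pow hβ₀ hβ hβ₁).mul_left p).add
        ((summable_prod_pow hg₀ hg₁ hg).mul_left (1 - p)))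

/-- **Cohen-DeVore-Schwab summability lemma.**  Let `0 < p < 1` and let `d = (d_j)_{j ≥ 1}`
be nonnegative reals with `(d_j) ∈ ℓ_p(ℕ)` and `Σ_j d_j < 1`.  Then the family
`((|ν|!/ν!) d^ν)_{ν ∈ F}`, indexed by the set `F = ℕ →₀ ℕ` of finitely supported
multi-indices, belongs to `ℓ_p(F)`; here `|ν| = Σ_j ν_j`, `ν! = Π_j ν_j!`, and
`d^ν = Π_j d_j^{ν_j}`. -/
theorem summability_factorial_family
    (p : ℝ) (hp0 : 0 < p) (hp1 : p < 1)
    (d : ℕ → ℝ) (hd0 : ∀ j, 0 ≤ d j)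
    (hdp : Summable fun j => d j ^ p)
    (hd1sum : Summable d) (hd1 : ∑' j, d j < 1) :
    Summable fun ν : ℕ →₀ ℕ =>
      ((((ν.sum fun _ k => k).factorial : ℝ) / (ν.prod fun _ k => (k.factorial : ℝ))) *
        (ν.prod fun j k => d j ^ k)) ^ p := by
  exact summability_factorial_family_general hp0 hd0 hdp hd1sum hd1
end

section
/- Let Y be a complex Banach space, let (w_j)_{j≥1} be positive reals, δ > 0, B ≥ 0, and let (v_ν)_{ν∈F} be a family in Y with the following property: for every sequence ρ = (ρ_j)_{j≥1} with ρ_j ≥ 1 for all j and Σ_{j≥1} (ρ_j − 1) w_j ≤ δ, one has ‖v_ν‖_Y ≤ B Π_{j≥1} ρ_j^{−ν_j} for all ν ∈ F. Then for every ν ∈ F with |ν| ≥ 1, ‖v_ν‖_Y ≤ B · (|ν|!/ν!) · Π_{j≥1} (e w_j/δ)^{ν_j}. -/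
/-!
For a fixed multi-index `ν ≠ 0`, use the single polyradius `ρ j = 1 + δ ν_j / (|ν| w_j)`, which
spends the whole budget `δ`, distributing it proportionally to `ν`. Since
`ρ j ≥ δ ν_j / (|ν| w_j)`, the Cauchy estimate gives
`‖v ν‖ ≤ B (|ν| ^ |ν| / ∏ ν_j ^ ν_j) ∏ (w_j / δ) ^ ν_j`, and the bounds `n ^ n ≤ e ^ n n!` and
`k! ≤ k ^ k` turn the powers into factorials at the cost of the factor `e ^ |ν|`.
-/

open scoped Nat

section MultiIndex

variable {ι : Type*}

lemma pow_self_le_exp_one_pow_mul_factorial (n : ℕ) : (n : ℝ) ^ n ≤ Real.exp 1 ^ n * n ! := by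
  rw [Real.exp_one_pow]
  exact (div_le_iff₀ (by positivity)).mp (Real.pow_div_factorial_le_exp n n.cast_nonneg n)

lemma finsupp_prod_const_pow {M : Type*} [CommMonoid M] (ν : ι →₀ ℕ) (c : M) :
    (ν.prod fun _ k ↦ c ^ k) = c ^ ν.degree :=
  Finset.prod_pow_eq_pow_sum ν.support ν c

lemma degree_pow_self_div_prod_pow_self_le (ν : ι →₀ ℕ) :
    (ν.degree : ℝ) ^ ν.degree / (ν.prod fun _ k ↦ (k : ℝ) ^ k) ≤
      Real.exp 1 ^ ν.degree * (ν.degree ! / ν.prod fun _ k ↦ (k ! : ℝ)) := by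
  have factorials_pos : 0 < ν.prod fun _ k ↦ (k ! : ℝ) :=
    Finset.prod_pos fun _ _ ↦ by positivity
  have factorials_le_powers : (ν.prod fun _ k ↦ (k ! : ℝ)) ≤ ν.prod fun _ k ↦ (k : ℝ) ^ k :=
    Finset.prod_le_prod (fun _ _ ↦ by positivity)
      fun j _ ↦ by beta_reduce; exact_mod_cast Nat.factorial_le_pow (ν j)
  rw [← mul_div_assoc]
  exact div_le_div₀ (by positivity) (pow_self_le_exp_one_pow_mul_factorial ν.degree)
    factorials_pos factorials_le_powers

/-- The polyradius adapted to the multi-index `ν`: the budget `δ` for `∑ j, (ρ j - 1) * w j` is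
distributed among the coordinates proportionally to `ν`. For `ν = 0` the quotient is `0` and all
radii are `1`. -/
noncomputable def proportionalPolyradius (w : ι → ℝ) (δ : ℝ) (ν : ι →₀ ℕ) (j : ι) : ℝ :=
  1 + δ * ν j / (ν.degree * w j)

section ProportionalPolyradius

variable {w : ι → ℝ} {δ : ℝ}

lemma one_le_proportionalPolyradius (hδ : 0 ≤ δ) (ν : ι →₀ ℕ) {j : ι} (hwj : 0 ≤ w j) :
    1 ≤ proportionalPolyradius w δ ν j :=
  le_add_of_nonneg_right (by positivity)

lemma hasSum_proportionalPolyradius_sub_one_mul (hw : ∀ j, w j ≠ 0) (δ : ℝ) {ν : ι →₀ ℕ}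
    (hν : ν ≠ 0) : HasSum (fun j ↦ (proportionalPolyradius w δ ν j - 1) * w j) δ := by
  have degree_ne_zero : (ν.degree : ℝ) ≠ 0 := mod_cast (Finsupp.degree_eq_zero_iff ν).not.mpr hν
  have term_eq (j : ι) : (proportionalPolyradius w δ ν j - 1) * w j = δ / ν.degree * ν j := by
    have := hw j
    rw [proportionalPolyradius]
    field_simp
    ring
  have sum_eq : ∑ j ∈ ν.support, δ / ν.degree * (ν j : ℝ) = δ := by
    rw [← Finset.mul_sum, ← Nat.cast_sum, ← Finsupp.degree_apply, div_mul_cancel₀ δ degree_ne_zero]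
  have vanishes_off_support (j : ι) (hj : j ∉ ν.support) : δ / ν.degree * (ν j : ℝ) = 0 := by
    rw [Finsupp.notMem_support_iff.mp hj, Nat.cast_zero, mul_zero]
  simpa only [term_eq, sum_eq] using hasSum_sum_of_ne_finset_zero vanishes_off_support

lemma inv_proportionalPolyradius_le (hδ : 0 < δ) {ν : ι →₀ ℕ} {j : ι} (hwj : 0 < w j)
    (hj : j ∈ ν.support) :
    (proportionalPolyradius w δ ν j)⁻¹ ≤ ν.degree * (w j / δ) / ν j := by
  have coeff_pos : 0 < ν j := Nat.pos_of_ne_zero (Finsupp.mem_support_iff.mp hj)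
  have degree_pos : 0 < ν.degree := coeff_pos.trans_le (Finsupp.le_degree j ν)
  calc (proportionalPolyradius w δ ν j)⁻¹
      ≤ (δ * ν j / (ν.degree * w j))⁻¹ :=
        inv_anti₀ (by positivity) (le_add_of_nonneg_left zero_le_one)
    _ = ν.degree * (w j / δ) / ν j := by field_simp

lemma prod_inv_proportionalPolyradius_pow_le (hw : ∀ j, 0 < w j) (hδ : 0 < δ) (ν : ι →₀ ℕ) :
    (ν.prod fun j k ↦ (proportionalPolyradius w δ ν j ^ k)⁻¹) ≤
      (ν.degree : ℝ) ^ ν.degree / (ν.prod fun _ k ↦ (k : ℝ) ^ k) *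
        ν.prod fun j k ↦ (w j / δ) ^ k := by
  have radius_pos (j : ι) : 0 < proportionalPolyradius w δ ν j :=
    zero_lt_one.trans_le (one_le_proportionalPolyradius hδ.le ν (hw j).le)
  calc (ν.prod fun j k ↦ (proportionalPolyradius w δ ν j ^ k)⁻¹)
      ≤ ν.prod fun j k ↦ (ν.degree * (w j / δ) / k) ^ k := by
        refine Finset.prod_le_prod (fun j _ ↦ ?_) fun j hj ↦ ?_
        · exact inv_nonneg.mpr (pow_nonneg (radius_pos j).le _)
        · beta_reduce
          rw [← inv_pow]
          exact pow_le_pow_left₀ (inv_nonneg.mpr (radius_pos j).le)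
            (inv_proportionalPolyradius_le hδ (hw j) hj) _
    _ = (ν.prod fun _ k ↦ (ν.degree : ℝ) ^ k) * (ν.prod fun j k ↦ (w j / δ) ^ k) /
          ν.prod fun _ k ↦ (k : ℝ) ^ k := by
        simp only [Finsupp.prod, div_pow, mul_pow, Finset.prod_div_distrib,
          Finset.prod_mul_distrib]
    _ = _ := by rw [finsupp_prod_const_pow, mul_div_right_comm]

end ProportionalPolyradius

theorem coeff_bound_of_cauchy_estimates_general {E : Type*} [SeminormedAddGroup E]
    {w : ι → ℝ} (hw : ∀ j, 0 < w j) {δ : ℝ} (hδ : 0 < δ) {B : ℝ} (v : (ι →₀ ℕ) → E)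
    (hv : ∀ ρ : ι → ℝ, (∀ j, 1 ≤ ρ j) →
      (Summable fun j ↦ (ρ j - 1) * w j) → (∑' j, (ρ j - 1) * w j) ≤ δ →
      ∀ ν : ι →₀ ℕ, ‖v ν‖ ≤ B * ν.prod fun j k ↦ (ρ j ^ k)⁻¹)
    (ν : ι →₀ ℕ) :
    ‖v ν‖ ≤ B * (ν.degree ! / ν.prod fun _ k ↦ (k ! : ℝ)) *
      ν.prod fun j k ↦ (Real.exp 1 * w j / δ) ^ k := by
  have norm_zero_le : ‖v 0‖ ≤ B := by
    simpa using hv 1 (fun _ ↦ le_rfl) (by simp) (by simpa using hδ.le) 0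
  obtain rfl | hν := eq_or_ne ν 0
  · simpa using norm_zero_le
  have hB : 0 ≤ B := (norm_nonneg _).trans norm_zero_le
  have budget := hasSum_proportionalPolyradius_sub_one_mul (fun j ↦ (hw j).ne') δ hν
  have weights_nonneg : 0 ≤ ν.prod fun j k ↦ (w j / δ) ^ k :=
    Finset.prod_nonneg fun j _ ↦ pow_nonneg (div_pos (hw j) hδ).le _
  calc ‖v ν‖
      ≤ B * ν.prod fun j k ↦ (proportionalPolyradius w δ ν j ^ k)⁻¹ :=
        hv _ (fun j ↦ one_le_proportionalPolyradius hδ.le ν (hw j).le) budget.summable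
          budget.tsum_eq.le ν
    _ ≤ B * ((ν.degree : ℝ) ^ ν.degree / (ν.prod fun _ k ↦ (k : ℝ) ^ k) *
          ν.prod fun j k ↦ (w j / δ) ^ k) := by
        gcongr
        exact prod_inv_proportionalPolyradius_pow_le hw hδ ν
    _ ≤ B * (Real.exp 1 ^ ν.degree * (ν.degree ! / ν.prod fun _ k ↦ (k ! : ℝ)) *
          ν.prod fun j k ↦ (w j / δ) ^ k) := by
        gcongr
        exact degree_pow_self_div_prod_pow_self_le ν
    _ = B * (ν.degree ! / ν.prod fun _ k ↦ (k ! : ℝ)) *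
          ν.prod fun j k ↦ (Real.exp 1 * w j / δ) ^ k := by
        simp only [mul_div_assoc (Real.exp 1), mul_pow, Finsupp.prod_mul, finsupp_prod_const_pow]
        ring

end MultiIndex

/-- **Coefficient bound from Cauchy estimates with variable polyradii** (Cohen-DeVore,
Step 3 of the proof of Theorem 2.1).  Let `Y` be a complex Banach space, `(w_j)_{j ≥ 1}`
positive reals, `δ > 0`, `B ≥ 0`, and let `(v_ν)_{ν ∈ F}` (`F = ℕ →₀ ℕ` the finitely
supported multi-indices) satisfy: for every sequence `ρ = (ρ_j)` with `ρ_j ≥ 1` and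
`Σ_j (ρ_j - 1) w_j ≤ δ` one has `‖v_ν‖ ≤ B Π_j ρ_j^{-ν_j}` for all `ν ∈ F`.  Then for
every `ν ∈ F` with `|ν| ≥ 1`, `‖v_ν‖ ≤ B (|ν|!/ν!) Π_j (e w_j / δ)^{ν_j}`. -/
theorem coeff_bound_of_cauchy_estimates
    {Y : Type*} [NormedAddCommGroup Y] [NormedSpace ℂ Y]
    (w : ℕ → ℝ) (hw : ∀ j, 0 < w j) (δ : ℝ) (hδ : 0 < δ) (B : ℝ) (hB : 0 ≤ B)
    (v : (ℕ →₀ ℕ) → Y)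
    (hv : ∀ ρ : ℕ → ℝ, (∀ j, 1 ≤ ρ j) →
      (Summable fun j => (ρ j - 1) * w j) → (∑' j, (ρ j - 1) * w j) ≤ δ →
      ∀ ν : ℕ →₀ ℕ, ‖v ν‖ ≤ B * ν.prod fun j k => (ρ j ^ k)⁻¹) :
    ∀ ν : ℕ →₀ ℕ, 1 ≤ (ν.sum fun _ k => k) →
      ‖v ν‖ ≤ B * (((ν.sum fun _ k => k).factorial : ℝ) /
          (ν.prod fun _ k => (k.factorial : ℝ))) *
        (ν.prod fun j k => (Real.exp 1 * w j / δ) ^ k) := by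
  exact fun ν _ ↦ coeff_bound_of_cauchy_estimates_general hw hδ v hv ν
end

section
/- Let X be a complex Banach space, ε > 0, and (ψ_j)_{j≥1} a sequence in X with Σ_{j≥1} ‖ψ_j‖_X < ∞. Let J ≥ 1 satisfy Σ_{j>J} ‖ψ_j‖_X < ε/10, assume Σ_{j=1}^J ‖ψ_j‖_X > 0, and set η := ε/(10 Σ_{j=1}^J ‖ψ_j‖_X). Let K be a compact subset of X with K ⊆ Q := {Σ_{j≥1} z_j ψ_j : z ∈ U}. Then there exist finitely many points b_1, …, b_M ∈ X, each of the form b_i = Σ_{j=1}^J z'_j ψ_j with |z'_j| ≤ 1, such that, defining Q_i := {b_i + η Σ_{j=1}^J z_j ψ_j + Σ_{j>J} z_j ψ_j : z ∈ U} for i = 1,…,M, one has: (a) K ⊆ Q_1 ∪ ⋯ ∪ Q_M, and (b) for every i and every x ∈ Q_i, dist(x, K) < 3ε/10; in particular every point at distance at most 7ε/10 from Q_i lies in the open ε-neighborhood K_ε := {x ∈ X : inf_{x'∈K} ‖x − x'‖_X < ε}. -/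
/-!
Truncating the expansion of a point of `K` to its first `J` coefficients gives a point of a
bounded, hence totally bounded, subset of `ℂ ^ J`. Choose a finite `η`-net of these truncations
made of truncations of points `p_i ∈ K`, and let `b_i` be the partial sum of `p_i`. If the
truncation of `x ∈ K` is `η`-close to that of `p_i`, then `x ∈ Q_i`. Conversely, a point of `Q_i`
differs from `b_i`, and `b_i` from `p_i`, by at most `η ∑_{j ≤ J} ‖ψ_j‖ + ∑_{j > J} ‖ψ_j‖` and
`∑_{j > J} ‖ψ_j‖` respectively, so it lies within `3ε/10` of `p_i`.
-/

theorem tsum_notMem_range {E : Type*} [AddCommMonoid E] [TopologicalSpace E] (f : ℕ → E) (n : ℕ) :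
    ∑' j : {j // j ∉ Finset.range n}, f j = ∑' k, f (n + k) := by
  rw [← (notMemRangeEquiv n).symm.tsum_eq]
  simp [add_comm]

theorem hasSum_piecewise_const_mul {ι R : Type*} [NonUnitalNonAssocSemiring R] [TopologicalSpace R]
    [IsTopologicalSemiring R] [DecidableEq ι] {f : ι → R} {s : Finset ι} {t : R}
    (hf : HasSum (fun j : {j // j ∉ s} => f j) t) (a b : R) :
    HasSum (fun j => s.piecewise (fun _ => a) (fun _ => b) j * f j)
      (a * ∑ j ∈ s, f j + b * t) := by
  have head : HasSum (fun j : {j // j ∈ s} => s.piecewise (fun _ => a) (fun _ => b) j.1 * f j)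
      (a * ∑ j ∈ s, f j) := by
    simpa using (s.hasSum f).mul_left a
  have tail : HasSum (fun j : {j // j ∉ s} => s.piecewise (fun _ => a) (fun _ => b) j.1 * f j)
      (b * t) := by
    convert hf.mul_left b using 2 with j
    rw [s.piecewise_eq_of_notMem _ _ j.2]
  exact head.add_compl tail

section PolydiscImage

variable {𝕜 X ι : Type*} [NormedField 𝕜] [SeminormedAddCommGroup X] [NormedSpace 𝕜 X]

/-- The image of the polydisc `{z | ∀ j, ‖z j‖ ≤ ρ j}` of polyradius `ρ` under
`z ↦ ∑ j, z j • ψ j`. Only unconditionally convergent series contribute. The set `Q` is the case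
`ρ = 1`, and `Q_i - b_i` is the case where `ρ` is `η` on the first `J` indices and `1` elsewhere. -/
def polydiscImage (𝕜 : Type*) [NormedField 𝕜] [NormedSpace 𝕜 X] (ρ : ι → ℝ) (ψ : ι → X) : Set X :=
  {x | ∃ z : ι → 𝕜, (∀ j, ‖z j‖ ≤ ρ j) ∧ HasSum (fun j => z j • ψ j) x}

variable {ρ σ : ι → ℝ} {ψ : ι → X} {x y : X}

theorem sub_mem_polydiscImage (hx : x ∈ polydiscImage 𝕜 ρ ψ) (hy : y ∈ polydiscImage 𝕜 σ ψ) :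
    x - y ∈ polydiscImage 𝕜 (ρ + σ) ψ := by
  obtain ⟨z, hzρ, hz⟩ := hx
  obtain ⟨w, hwσ, hw⟩ := hy
  refine ⟨z - w, fun j => (norm_sub_le _ _).trans (add_le_add (hzρ j) (hwσ j)), ?_⟩
  simpa only [Pi.sub_apply, sub_smul] using hz.sub hw

theorem norm_le_of_mem_polydiscImage {C : ℝ} (hx : x ∈ polydiscImage 𝕜 ρ ψ)
    (hC : HasSum (fun j => ρ j * ‖ψ j‖) C) : ‖x‖ ≤ C := by
  obtain ⟨z, hzρ, hz⟩ := hx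
  refine hz.norm_le_of_bounded hC fun j => ?_
  rw [norm_smul]
  gcongr
  exact hzρ j

theorem mem_polydiscImage_norm_iff (c : ι → 𝕜) :
    x ∈ polydiscImage 𝕜 (fun j => ‖c j‖) ψ ↔
      ∃ z : ι → 𝕜, (∀ j, ‖z j‖ ≤ 1) ∧ HasSum (fun j => (c j * z j) • ψ j) x := by
  constructor
  · rintro ⟨w, hwc, hw⟩
    have mul_inv_mul_self (j : ι) : c j * ((c j)⁻¹ * w j) = w j := by
      obtain hcj | hcj := eq_or_ne (c j) 0
      · simpa [hcj, eq_comm] using hwc j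
      · exact mul_inv_cancel_left₀ hcj (w j)
    refine ⟨fun j => (c j)⁻¹ * w j, fun j => ?_, by simpa only [mul_inv_mul_self] using hw⟩
    rw [norm_mul, norm_inv]
    exact inv_mul_le_one_of_le₀ (hwc j) (norm_nonneg _)
  · rintro ⟨z, hz_le, hz⟩
    refine ⟨fun j => c j * z j, fun j => ?_, hz⟩
    rw [norm_mul]
    exact mul_le_of_le_one_right (norm_nonneg _) (hz_le j)

variable [DecidableEq ι] {s : Finset ι}

theorem sub_sum_mem_polydiscImage_piecewise {z w : ι → 𝕜}
    (hzσ : ∀ j, ‖z j‖ ≤ σ j) (hz : HasSum (fun j => z j • ψ j) x)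
    (hzw : ∀ j ∈ s, ‖z j - w j‖ ≤ ρ j) :
    x - ∑ j ∈ s, w j • ψ j ∈ polydiscImage 𝕜 (s.piecewise ρ σ) ψ := by
  refine ⟨s.piecewise (z - w) z, fun j => ?_, ?_⟩
  · by_cases hj : j ∈ s
    · simpa [hj] using hzw j hj
    · simpa [hj] using hzσ j
  · have hw : HasSum (fun j => s.piecewise w 0 j • ψ j) (∑ j ∈ s, w j • ψ j) := by
      have sum_eq : ∑ j ∈ s, s.piecewise w 0 j • ψ j = ∑ j ∈ s, w j • ψ j :=
        Finset.sum_congr rfl fun j hj => by rw [s.piecewise_eq_of_mem w 0 hj]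
      exact sum_eq ▸ hasSum_sum_of_ne_finset_zero fun j hj => by simp [hj]
    convert hz.sub hw using 2 with j
    by_cases hj : j ∈ s <;> simp [hj, sub_smul]

theorem norm_sub_le_of_mem_polydiscImage_piecewise (hψ : Summable fun j => ‖ψ j‖) {r : ℝ} {b : X}
    (hx : x - b ∈ polydiscImage 𝕜 (s.piecewise (fun _ => r) 1) ψ)
    (hy : y - b ∈ polydiscImage 𝕜 (s.piecewise 0 1) ψ) :
    ‖x - y‖ ≤ r * ∑ j ∈ s, ‖ψ j‖ + 2 * ∑' j : {j // j ∉ s}, ‖ψ j‖ := by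
  have polyradius_add : s.piecewise (fun _ => r) (1 : ι → ℝ) + s.piecewise (0 : ι → ℝ) 1 =
      s.piecewise (fun _ => r) fun _ => 2 := by
    funext j
    by_cases hj : j ∈ s <;> simp [hj, one_add_one_eq_two]
  have hxy := sub_mem_polydiscImage hx hy
  rw [sub_sub_sub_cancel_right, polyradius_add] at hxy
  exact norm_le_of_mem_polydiscImage hxy
    (hasSum_piecewise_const_mul (hψ.subtype {j | j ∉ s}).hasSum r 2)

end PolydiscImage

theorem exists_fin_net_of_totallyBounded_range {α E : Type*} [PseudoMetricSpace E] {f : α → E}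
    (hf : TotallyBounded (Set.range f)) {r : ℝ} (hr : 0 < r) :
    ∃ (M : ℕ) (p : Fin M → α), ∀ a, ∃ i, dist (f a) (f (p i)) < r := by
  obtain ⟨t, ht_range, ht_finite, hcover⟩ := hf.exists_subset (Metric.dist_mem_uniformity hr)
  obtain ⟨M, c, -, rfl⟩ := ht_finite.fin_param
  choose p hp using fun i => ht_range (Set.mem_range_self i)
  refine ⟨M, p, fun a => ?_⟩
  simpa [hp] using hcover (Set.mem_range_self a)

theorem exists_fin_net_coeff {𝕜 α ι : Type*} [NormedField 𝕜] [ProperSpace 𝕜] (s : Finset ι)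
    {z : α → ι → 𝕜} {C : ℝ} (hz : ∀ a, ∀ j ∈ s, ‖z a j‖ ≤ C) {r : ℝ} (hr : 0 < r) :
    ∃ (M : ℕ) (p : Fin M → α), ∀ a, ∃ i, ∀ j ∈ s, ‖z a j - z (p i) j‖ ≤ r := by
  have totallyBounded_restrict : TotallyBounded (Set.range fun a (j : s) => z a j) := by
    refine (isCompact_univ_pi fun _ : s => isCompact_closedBall (0 : 𝕜) C).totallyBounded.subset ?_
    rintro _ ⟨a, rfl⟩ j -
    simpa using hz a j j.2
  obtain ⟨M, p, hp⟩ := exists_fin_net_of_totallyBounded_range totallyBounded_restrict hr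
  refine ⟨M, p, fun a => (hp a).imp fun i hi j hj => ?_⟩
  rw [← dist_eq_norm]
  exact (dist_le_pi_dist _ _ (⟨j, hj⟩ : s)).trans hi.le

theorem exists_fin_cover_polydiscImage {𝕜 X ι : Type*} [NormedField 𝕜] [ProperSpace 𝕜]
    [SeminormedAddCommGroup X] [NormedSpace 𝕜 X] [DecidableEq ι] {ψ : ι → X} {K : Set X}
    (hK : K ⊆ polydiscImage 𝕜 1 ψ) (s : Finset ι) {r : ℝ} (hr : 0 < r) :
    ∃ (M : ℕ) (b : Fin M → X),
      (∀ i, ∃ z : ι → 𝕜, (∀ j, ‖z j‖ ≤ 1) ∧ b i = ∑ j ∈ s, z j • ψ j) ∧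
      (∀ i, ∃ p ∈ K, p - b i ∈ polydiscImage 𝕜 (s.piecewise 0 1) ψ) ∧
      ∀ x ∈ K, ∃ i, x - b i ∈ polydiscImage 𝕜 (s.piecewise (fun _ => r) 1) ψ := by
  choose z hz_le hz using fun x : K => hK x.2
  obtain ⟨M, p, hp⟩ := exists_fin_net_coeff s (fun x j _ => hz_le x j) hr
  refine ⟨M, fun i => ∑ j ∈ s, z (p i) j • ψ j, fun i => ⟨z (p i), hz_le (p i), rfl⟩,
    fun i => ⟨p i, (p i).2, ?_⟩, fun x hx => (hp ⟨x, hx⟩).imp fun i hi => ?_⟩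
  · exact sub_sum_mem_polydiscImage_piecewise (hz_le _) (hz _) fun j _ => by simp
  · exact sub_sum_mem_polydiscImage_piecewise (hz_le _) (hz ⟨x, hx⟩) hi

theorem localization_of_box_cover_general {𝕜 X ι : Type*} [NormedField 𝕜] [ProperSpace 𝕜]
    [SeminormedAddCommGroup X] [NormedSpace 𝕜 X] [DecidableEq ι]
    {ε : ℝ} {ψ : ι → X} (hψ : Summable fun j => ‖ψ j‖)
    {s : Finset ι} (htail : ∑' j : {j // j ∉ s}, ‖ψ j‖ < ε / 10)
    {η : 𝕜} (hη_ne : η ≠ 0) (hη : ‖η‖ * ∑ j ∈ s, ‖ψ j‖ ≤ ε / 10)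
    {K : Set X} (hK : K ⊆ polydiscImage 𝕜 1 ψ) :
    ∃ (M : ℕ) (b : Fin M → X) (Qi : Fin M → Set X),
      (∀ i, ∃ z' : ι → 𝕜, (∀ j, ‖z' j‖ ≤ 1) ∧ b i = ∑ j ∈ s, z' j • ψ j) ∧
      (∀ i, Qi i = {x : X | ∃ z : ι → 𝕜, (∀ j, ‖z j‖ ≤ 1) ∧
        HasSum (fun j => (if j ∈ s then η * z j else z j) • ψ j) (x - b i)}) ∧
      (K ⊆ ⋃ i, Qi i) ∧
      (∀ i, ∀ x ∈ Qi i, ∃ x' ∈ K, ‖x - x'‖ < 3 * ε / 10) ∧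
      (∀ i, ∀ y : X, (∃ x ∈ Qi i, ‖y - x‖ ≤ 7 * ε / 10) → ∃ x' ∈ K, ‖y - x'‖ < ε) := by
  obtain ⟨M, b, hb, hbK, hcover⟩ := exists_fin_cover_polydiscImage hK s (norm_pos_iff.2 hη_ne)
  have near (i : Fin M) (x : X)
      (hx : x - b i ∈ polydiscImage 𝕜 (s.piecewise (fun _ => ‖η‖) 1) ψ) :
      ∃ x' ∈ K, ‖x - x'‖ < 3 * ε / 10 := by
    obtain ⟨p, hpK, hp⟩ := hbK i
    refine ⟨p, hpK, ?_⟩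
    linarith [norm_sub_le_of_mem_polydiscImage_piecewise hψ hx hp]
  have polyradius_eq :
      s.piecewise (fun _ => ‖η‖) 1 = fun j => ‖s.piecewise (fun _ => η) 1 j‖ := by
    funext j
    by_cases hj : j ∈ s <;> simp [hj]
  refine ⟨M, b, fun i => {x | x - b i ∈ polydiscImage 𝕜 (s.piecewise (fun _ => ‖η‖) 1) ψ}, hb,
    fun i => ?_, fun x hx => Set.mem_iUnion.2 (hcover x hx), near, ?_⟩
  · ext x
    simp only [polyradius_eq, Set.mem_ofPred_eq, mem_polydiscImage_norm_iff, Finset.piecewise,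
      Pi.one_apply, ite_mul, one_mul]
  · rintro i y ⟨x, hx, hyx⟩
    obtain ⟨x', hx'K, hxx'⟩ := near i x hx
    refine ⟨x', hx'K, ?_⟩
    linarith [norm_sub_le_norm_sub_add_norm_sub y x x']

/-- **Localization step** (Cohen-DeVore, Step 1 of the proof of Theorem 2.1).
Let `X` be a complex Banach space, `ε > 0`, and `(ψ_j)_{j ≥ 1}` a sequence in `X` with
`Σ_j ‖ψ_j‖ < ∞`.  Let `J ≥ 1` be such that `Σ_{j > J} ‖ψ_j‖ < ε/10`, assume
`Σ_{j=1}^J ‖ψ_j‖ > 0`, and set `η := ε / (10 Σ_{j=1}^J ‖ψ_j‖)`.  Let `K ⊆ X` be compact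
with `K ⊆ Q = {Σ_j z_j ψ_j : z ∈ U}`.  Then there are finitely many points
`b_1, …, b_M`, each of the form `b_i = Σ_{j=1}^J z'_j ψ_j` with `|z'_j| ≤ 1`, such that,
with `Q_i := {b_i + η Σ_{j=1}^J z_j ψ_j + Σ_{j > J} z_j ψ_j : z ∈ U}`:
(a) `K ⊆ Q_1 ∪ ⋯ ∪ Q_M`; (b) every `x ∈ Q_i` satisfies `dist(x, K) < 3ε/10`; in
particular every point within distance `7ε/10` of `Q_i` lies in the open `ε`-neighborhood
`K_ε` of `K`.  (Sequences are indexed by `ℕ`, index `j ∈ ℕ` corresponding to the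
`(j+1)`-st term: the first `J` terms are those with `j < J`.) -/
theorem localization_of_box_cover
    {X : Type*} [NormedAddCommGroup X] [NormedSpace ℂ X] [CompleteSpace X]
    (ε : ℝ) (hε : 0 < ε)
    (ψ : ℕ → X) (hψ : Summable fun j => ‖ψ j‖)
    (J : ℕ) (hJ : 1 ≤ J) (htail : (∑' k : ℕ, ‖ψ (J + k)‖) < ε / 10)
    (hhead : 0 < ∑ j ∈ Finset.range J, ‖ψ j‖)
    (η : ℝ) (hη : η = ε / (10 * ∑ j ∈ Finset.range J, ‖ψ j‖))
    (K : Set X) (hK : IsCompact K)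
    (hKQ : ∀ x ∈ K, ∃ z : ℕ → ℂ, (∀ j, ‖z j‖ ≤ 1) ∧ HasSum (fun j => z j • ψ j) x) :
    ∃ (M : ℕ) (b : Fin M → X) (Qi : Fin M → Set X),
      (∀ i, ∃ z' : ℕ → ℂ, (∀ j, ‖z' j‖ ≤ 1) ∧ b i = ∑ j ∈ Finset.range J, z' j • ψ j) ∧
      (∀ i, Qi i = {x : X | ∃ z : ℕ → ℂ, (∀ j, ‖z j‖ ≤ 1) ∧
        HasSum (fun j => (if j < J then (η : ℂ) * z j else z j) • ψ j) (x - b i)}) ∧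
      (K ⊆ ⋃ i, Qi i) ∧
      (∀ i, ∀ x ∈ Qi i, ∃ x' ∈ K, ‖x - x'‖ < 3 * ε / 10) ∧
      (∀ i, ∀ y : X, (∃ x ∈ Qi i, ‖y - x‖ ≤ 7 * ε / 10) →
        ∃ x' ∈ K, ‖y - x'‖ < ε) := by
  have hη_pos : 0 < η := by rw [hη]; positivity
  have hη_head : ‖(η : ℂ)‖ * ∑ j ∈ Finset.range J, ‖ψ j‖ ≤ ε / 10 := by
    rw [Complex.norm_of_nonneg hη_pos.le, hη]
    exact le_of_eq (by field_simp)
  simpa only [Finset.mem_range] using localization_of_box_cover_general hψ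
    ((tsum_notMem_range (fun j => ‖ψ j‖) J).trans_lt htail)
    (Complex.ofReal_ne_zero.2 hη_pos.ne') hη_head hKQ
end

section
/- Let X and Y be complex Banach spaces, O ⊆ X open, and u : O → Y holomorphic on O with sup_{x∈O} ‖u(x)‖_Y ≤ B. Let b ∈ X and let (ψ_j)_{j≥1} be a sequence in X with Σ_{j≥1} ‖ψ_j‖_X < ∞. Let δ > 0 and suppose every point at distance at most δ from the set Q* := {b + Σ_{j≥1} z_j ψ_j : z ∈ U} lies in O. Let ρ = (ρ_j)_{j≥1} satisfy ρ_j ≥ 1 for all j and Σ_{j≥1} (ρ_j − 1) ‖ψ_j‖_X ≤ δ. Then the map v(z) := u(b + Σ_{j≥1} z_j ψ_j) is well defined on the polydisc U_ρ := {z ∈ ℂ^ℕ : |z_j| ≤ ρ_j for all j}, satisfies ‖v(z)‖_Y ≤ B for all z ∈ U_ρ, and for each fixed z ∈ U_ρ and each index k, the one-variable map ζ ↦ u(b + ζ ψ_k + Σ_{j≠k} z_j ψ_j) is holomorphic on the open disc {|ζ| < ρ_k}. -/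
/-!
A point `z` of the polydisc of radii `ρ = 1 + (ρ - 1)` splits coordinatewise as `w + (z - w)` with
`w` in the unit polydisc and `‖z j - w j‖ ≤ ρ j - 1`. Hence `b + ∑ z j • ψ j` lies within
`∑ (ρ j - 1) * ‖ψ j‖ ≤ δ` of `b + ∑ w j • ψ j`, so it belongs to `O`. Moving one coordinate of `z`
moves this point along an affine line, and the chain rule applies.
-/

open Function

section Polydisc

variable {ι E : Type*} [SeminormedAddCommGroup E]

/-- The closed polydisc `U_ρ` centred at the origin, with one radius for each coordinate. The
coordinates lie in an arbitrary seminormed group and the index set may be infinite. -/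
def polydisc (E : Type*) [SeminormedAddCommGroup E] (ρ : ι → ℝ) : Set (ι → E) :=
  {z | ∀ j, ‖z j‖ ≤ ρ j}

theorem update_mem_polydisc [DecidableEq ι] {ρ : ι → ℝ} {z : ι → E} (hz : z ∈ polydisc E ρ)
    {k : ι} {ζ : E} (hζ : ‖ζ‖ ≤ ρ k) : update z k ζ ∈ polydisc E ρ :=
  (forall_update_iff z fun j c => ‖c‖ ≤ ρ j).2 ⟨hζ, fun j _ => hz j⟩

theorem exists_mem_polydisc_sub_mem_polydisc [NormedSpace ℝ E] {r s : ι → ℝ} (hr : 0 ≤ r)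
    (hs : 0 ≤ s) {z : ι → E} (hz : z ∈ polydisc E (r + s)) :
    ∃ w ∈ polydisc E r, z - w ∈ polydisc E s := by
  have split_coord (j : ι) : ∃ c : E, ‖c‖ ≤ r j ∧ ‖z j - c‖ ≤ s j := by
    obtain ⟨c, hzc, hc⟩ := exists_dist_le_le (x := z j) (z := 0) (hs j) (hr j)
      ((dist_zero_right (z j)).trans_le (hz j))
    exact ⟨c, by rwa [dist_zero_right] at hc, by rwa [dist_eq_norm] at hzc⟩
  choose w hw hzw using split_coord
  exact ⟨w, hw, hzw⟩

end Polydisc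

section Series

variable {ι 𝕜 X : Type*} [NormedField 𝕜] [NormedAddCommGroup X] [NormedSpace 𝕜 X]
  {ψ : ι → X} {ρ : ι → ℝ} {z : ι → 𝕜}

theorem norm_smul_le_of_mem_polydisc (hz : z ∈ polydisc 𝕜 ρ) (j : ι) :
    ‖z j • ψ j‖ ≤ ρ j * ‖ψ j‖ := by
  rw [norm_smul]
  exact mul_le_mul_of_nonneg_right (hz j) (norm_nonneg _)

theorem summable_smul_of_mem_polydisc [CompleteSpace X] (hρ : Summable fun j => ρ j * ‖ψ j‖)
    (hz : z ∈ polydisc 𝕜 ρ) : Summable fun j => z j • ψ j :=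
  .of_norm_bounded hρ (norm_smul_le_of_mem_polydisc hz)

theorem norm_tsum_smul_le_of_mem_polydisc (hρ : Summable fun j => ρ j * ‖ψ j‖)
    (hz : z ∈ polydisc 𝕜 ρ) : ‖∑' j, z j • ψ j‖ ≤ ∑' j, ρ j * ‖ψ j‖ :=
  tsum_of_norm_bounded hρ.hasSum (norm_smul_le_of_mem_polydisc hz)

theorem tsum_update_smul [DecidableEq ι] (hz : Summable fun j => z j • ψ j) (k : ι) (ζ : 𝕜) :
    ∑' j, update z k ζ j • ψ j = ζ • ψ k - z k • ψ k + ∑' j, z j • ψ j := by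
  rw [funext (apply_update (fun j (c : 𝕜) => c • ψ j) z k ζ)]
  exact (hz.hasSum.update k (ζ • ψ k)).tsum_eq

end Series

theorem exists_mem_polydisc_norm_tsum_smul_sub_le {ι 𝕜 X : Type*} [RCLike 𝕜]
    [NormedAddCommGroup X] [NormedSpace 𝕜 X] [CompleteSpace X] {ψ : ι → X} {r s : ι → ℝ}
    (hr : 0 ≤ r) (hs : 0 ≤ s) (hrψ : Summable fun j => r j * ‖ψ j‖)
    (hsψ : Summable fun j => s j * ‖ψ j‖) {z : ι → 𝕜} (hz : z ∈ polydisc 𝕜 (r + s)) :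
    ∃ w ∈ polydisc 𝕜 r, ‖∑' j, z j • ψ j - ∑' j, w j • ψ j‖ ≤ ∑' j, s j * ‖ψ j‖ := by
  obtain ⟨w, hw, hzw⟩ := exists_mem_polydisc_sub_mem_polydisc hr hs hz
  have hw_sum : Summable fun j => w j • ψ j := summable_smul_of_mem_polydisc hrψ hw
  have hz_sum : Summable fun j => z j • ψ j := by
    refine summable_smul_of_mem_polydisc ?_ hz
    simpa only [Pi.add_apply, add_mul] using hrψ.add hsψ
  refine ⟨w, hw, ?_⟩
  rw [← hz_sum.tsum_sub hw_sum]
  simpa only [Pi.sub_apply, sub_smul] using norm_tsum_smul_le_of_mem_polydisc hsψ hzw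

theorem differentiableOn_comp_add_tsum_update_smul {ι 𝕜 X Y : Type*} [DecidableEq ι]
    [NontriviallyNormedField 𝕜] [NormedAddCommGroup X] [NormedSpace 𝕜 X]
    [NormedAddCommGroup Y] [NormedSpace 𝕜 Y] {O : Set X} {u : X → Y}
    (hu : DifferentiableOn 𝕜 u O) {b : X} {ψ : ι → X} {z : ι → 𝕜}
    (hz : Summable fun j => z j • ψ j) {k : ι} {D : Set 𝕜}
    (hD : ∀ ζ ∈ D, b + ∑' j, update z k ζ j • ψ j ∈ O) :
    DifferentiableOn 𝕜 (fun ζ => u (b + ∑' j, update z k ζ j • ψ j)) D := by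
  refine hu.fun_comp (f := fun ζ => b + ∑' j, update z k ζ j • ψ j) ?_ hD
  simp only [tsum_update_smul hz]
  fun_prop

theorem holomorphic_on_polydisc_extension_general {ι 𝕜 X Y : Type*} [DecidableEq ι] [RCLike 𝕜]
    [NormedAddCommGroup X] [NormedSpace 𝕜 X] [CompleteSpace X]
    [NormedAddCommGroup Y] [NormedSpace 𝕜 Y]
    {O : Set X} {u : X → Y} (hu : DifferentiableOn 𝕜 u O) {B : ℝ} (hB : ∀ x ∈ O, ‖u x‖ ≤ B)
    {b : X} {ψ : ι → X} (hψ : Summable fun j => ‖ψ j‖) {δ : ℝ}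
    (hQ : ∀ y : X, (∃ x : X, (∃ z ∈ polydisc 𝕜 (1 : ι → ℝ),
      HasSum (fun j => z j • ψ j) (x - b)) ∧ ‖y - x‖ ≤ δ) → y ∈ O)
    {ρ : ι → ℝ} (hρ1 : ∀ j, 1 ≤ ρ j) (hρs : Summable fun j => (ρ j - 1) * ‖ψ j‖)
    (hρδ : ∑' j, (ρ j - 1) * ‖ψ j‖ ≤ δ) :
    (∀ z ∈ polydisc 𝕜 ρ, Summable (fun j => z j • ψ j) ∧
      b + ∑' j, z j • ψ j ∈ O ∧ ‖u (b + ∑' j, z j • ψ j)‖ ≤ B) ∧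
    ∀ z ∈ polydisc 𝕜 ρ, ∀ k, DifferentiableOn 𝕜
      (fun ζ => u (b + ∑' j, update z k ζ j • ψ j)) {ζ | ‖ζ‖ ≤ ρ k} := by
  have h1ψ : Summable fun j => (1 : ι → ℝ) j * ‖ψ j‖ := by simpa only [Pi.one_apply, one_mul]
  have hρψ : Summable fun j => ρ j * ‖ψ j‖ := by
    simpa only [sub_mul, one_mul, sub_add_cancel] using hρs.add hψ
  have summable_smul {z : ι → 𝕜} (hz : z ∈ polydisc 𝕜 ρ) : Summable fun j => z j • ψ j :=
    summable_smul_of_mem_polydisc hρψ hz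
  have mem_O {z : ι → 𝕜} (hz : z ∈ polydisc 𝕜 ρ) : b + ∑' j, z j • ψ j ∈ O := by
    rw [← add_sub_cancel 1 ρ] at hz
    obtain ⟨w, hw, hzw⟩ := exists_mem_polydisc_norm_tsum_smul_sub_le zero_le_one
      (sub_nonneg.2 hρ1) h1ψ hρs hz
    refine hQ _ ⟨b + ∑' j, w j • ψ j, ⟨w, hw, ?_⟩, ?_⟩
    · rw [add_sub_cancel_left]
      exact (summable_smul_of_mem_polydisc h1ψ hw).hasSum
    · rw [add_sub_add_left_eq_sub]
      exact hzw.trans hρδ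
  refine ⟨fun z hz => ⟨summable_smul hz, mem_O hz, hB _ (mem_O hz)⟩, fun z hz k => ?_⟩
  exact differentiableOn_comp_add_tsum_update_smul hu (summable_smul hz) fun ζ hζ =>
    mem_O (update_mem_polydisc hz hζ)

/-- **Parametrization and holomorphic extension** (Cohen-DeVore, Step 2 of the proof of
Theorem 2.1).  Let `X, Y` be complex Banach spaces, `O ⊆ X` open, `u` holomorphic on `O`
with `‖u‖ ≤ B` on `O`.  Let `b ∈ X` and `(ψ_j)_{j ≥ 1}` a sequence in `X` with
`Σ_j ‖ψ_j‖ < ∞`.  Let `δ > 0` and suppose every point within distance `δ` of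
`Q* = {b + Σ_j z_j ψ_j : z ∈ U}` lies in `O`.  Let `ρ = (ρ_j)` satisfy `ρ_j ≥ 1` and
`Σ_j (ρ_j - 1) ‖ψ_j‖ ≤ δ`.  Then `v(z) := u(b + Σ_j z_j ψ_j)` is well defined on the
polydisc `U_ρ = {z : |z_j| ≤ ρ_j}` with `‖v(z)‖ ≤ B` there, and for each `z ∈ U_ρ` and
each index `k`, the one-variable map `ζ ↦ u(b + ζ ψ_k + Σ_{j ≠ k} z_j ψ_j)` is holomorphic
on the open disc `{|ζ| < ρ_k}`. -/
theorem holomorphic_on_polydisc_extension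
    {X Y : Type*} [NormedAddCommGroup X] [NormedSpace ℂ X] [CompleteSpace X]
    [NormedAddCommGroup Y] [NormedSpace ℂ Y] [CompleteSpace Y]
    (O : Set X) (hO : IsOpen O) (u : X → Y) (hu : DifferentiableOn ℂ u O)
    (B : ℝ) (hB : ∀ x ∈ O, ‖u x‖ ≤ B)
    (b : X) (ψ : ℕ → X) (hψ : Summable fun j => ‖ψ j‖)
    (δ : ℝ) (hδ : 0 < δ)
    (hQ : ∀ y : X, (∃ x : X, (∃ z : ℕ → ℂ, (∀ j, ‖z j‖ ≤ 1) ∧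
      HasSum (fun j => z j • ψ j) (x - b)) ∧ ‖y - x‖ ≤ δ) → y ∈ O)
    (ρ : ℕ → ℝ) (hρ1 : ∀ j, 1 ≤ ρ j)
    (hρs : Summable fun j => (ρ j - 1) * ‖ψ j‖)
    (hρδ : (∑' j, (ρ j - 1) * ‖ψ j‖) ≤ δ) :
    (∀ z : ℕ → ℂ, (∀ j, ‖z j‖ ≤ ρ j) →
      Summable (fun j => z j • ψ j) ∧
      (b + ∑' j, z j • ψ j) ∈ O ∧
      ‖u (b + ∑' j, z j • ψ j)‖ ≤ B) ∧
    (∀ z : ℕ → ℂ, (∀ j, ‖z j‖ ≤ ρ j) → ∀ k : ℕ,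
      DifferentiableOn ℂ
        (fun ζ : ℂ => u (b + ∑' j, Function.update z k ζ j • ψ j))
        {ζ : ℂ | ‖ζ‖ < ρ k}) :=
  (holomorphic_on_polydisc_extension_general hu hB hψ hQ hρ1 hρs hρδ).imp_right
    fun h z hz k => (h z hz k).mono (Set.ofPred_subset_ofPred.2 fun _ => le_of_lt)
end
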